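/- arXiv:1209.0417 — 2 statements merged into one kernel-verified Lean document; each statement's English description precedes it below -/
import Mathlib

section
/- Let G be a residually finite group and K a field. Then the intersection, taken over all normal subgroups N of G of finite index, of the kernels of the K-algebra homomorphisms MonoidAlgebra K G → MonoidAlgebra K (G ⧸ N) induced by the quotient maps G → G ⧸ N, is the zero ideal. -/
/-!
An element `x` of the group algebra has finite support `S`, so the quotients `a⁻¹ * b` of distinct
elements of `S` form a finite set avoiding `1`. Residual finiteness, together with the fact that
finite intersections of normal subgroups of finite index are again such, yields a single normal
subgroup `N` of finite index avoiding all of them (`exists_normal_finiteIndex_disjoint`). Then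
`G → G ⧸ N` is injective on `S`, so pushing `x` forward loses no coefficient, and `x` can only lie
in the kernel if `x = 0`.
-/

/-- In a residually finite group, finitely many nontrivial elements are avoided simultaneously by
one normal subgroup of finite index. -/
lemma exists_normal_finiteIndex_disjoint {G : Type*} [Group G]
    (hres : ∀ g : G, g ≠ 1 → ∃ N : Subgroup G, N.Normal ∧ N.FiniteIndex ∧ g ∉ N)
    (T : Finset G) (hT : ∀ t ∈ T, t ≠ 1) :
    ∃ N : Subgroup G, N.Normal ∧ N.FiniteIndex ∧ ∀ t ∈ T, t ∉ N := by
  classical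
  induction T using Finset.induction_on with
  | empty => exact ⟨⊤, inferInstance, inferInstance, by simp⟩
  | insert a s _ ih =>
    obtain ⟨N, hN, hNf, h⟩ := ih fun t ht => hT t (Finset.mem_insert_of_mem ht)
    obtain ⟨M, hM, hMf, haM⟩ := hres a (hT a (Finset.mem_insert_self a s))
    refine ⟨M ⊓ N, inferInstance, inferInstance, fun t ht htMN => ?_⟩
    rcases Finset.mem_insert.mp ht with rfl | ht
    · exact haM htMN.1
    · exact h t ht htMN.2

/-- Let `G` be a residually finite group and `K` a field. Then the
intersection, over all normal subgroups `N` of `G` of finite index, of the kernels of the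
`K`-algebra homomorphisms `MonoidAlgebra K G → MonoidAlgebra K (G ⧸ N)` induced by the
quotient maps, is the zero ideal. -/
theorem stmt0 (K : Type) [Field K] (G : Type) [Group G]
    (hres : ∀ g : G, g ≠ 1 → ∃ N : Subgroup G, N.Normal ∧ N.FiniteIndex ∧ g ∉ N) :
    sInf { I : Ideal (MonoidAlgebra K G) |
      ∃ (N : Subgroup G) (_ : N.Normal) (_ : N.FiniteIndex),
        I = RingHom.ker (MonoidAlgebra.mapDomainAlgHom K K (QuotientGroup.mk' N)) } = ⊥ := by
  classical
  rw [eq_bot_iff]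
  intro x hx
  rw [Submodule.mem_sInf] at hx
  obtain ⟨N, hN, hNf, h⟩ := exists_normal_finiteIndex_disjoint hres
    (((x.coeff.support ×ˢ x.coeff.support).image fun p => p.1⁻¹ * p.2).erase 1)
    fun t ht => Finset.ne_of_mem_erase ht
  have hinj : Set.InjOn (QuotientGroup.mk' N) (x.coeff.support : Set G) := by
    intro a ha b hb hab
    by_contra hne
    refine h (a⁻¹ * b) (Finset.mem_erase.mpr ⟨fun h1 => hne (inv_mul_eq_one.mp h1), ?_⟩)
      (QuotientGroup.eq.mp hab)
    exact Finset.mem_image.mpr ⟨(a, b), Finset.mem_product.mpr ⟨ha, hb⟩, rfl⟩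
  have hker : MonoidAlgebra.mapDomain (QuotientGroup.mk' N) x = 0 :=
    hx _ ⟨N, hN, hNf, rfl⟩
  have hcoeff : Finsupp.mapDomain (QuotientGroup.mk' N) x.coeff = 0 :=
    congrArg MonoidAlgebra.coeff hker
  have hzero : x.coeff = 0 :=
    Finsupp.mapDomain_injOn _ hinj (Set.Subset.refl _) (by simp) (by simpa using hcoeff)
  rw [Submodule.mem_bot]
  ext g
  simp [hzero]
end

section
/- Let G be a residually finite group, K a field, n a natural number, P a group, and φ : P → Gⁿ a group homomorphism (where Gⁿ = Fin n → G with pointwise multiplication). For a normal subgroup H of G of finite index, let I_H ⊆ MonoidAlgebra K P be the kernel of the K-algebra homomorphism MonoidAlgebra K P → MonoidAlgebra K ((G ⧸ H)ⁿ) induced by composing φ with the n-fold product of the quotient map G → G ⧸ H. Then the intersection of the ideals I_H over all normal subgroups H of G of finite index equals the kernel of the K-algebra homomorphism MonoidAlgebra K P → MonoidAlgebra K (Gⁿ) induced by φ. (This is the paper's Proposition ⋂_H 𝓘_{n,H} = 𝓘_n, stated for an arbitrary homomorphism in place of the canonical surjection P_n(M) → π₁(M)ⁿ.) -/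
/-!
The inclusion `⊇` holds because each map defining `I_H` factors through the one induced by `φ`.
For `⊆`, let `y` be the image of `x` in `K[Gⁿ]`. Its support is finite, so residual finiteness
gives one normal subgroup `H` of finite index avoiding all the nontrivial quotients
`(a i)⁻¹ * b i` with `a, b` in the support of `y` (`exists_normal_finiteIndex_avoiding`). Then
`Gⁿ → (G ⧸ H)ⁿ` is injective on the support of `y`, and so the image of `y` in `K[(G ⧸ H)ⁿ]`
vanishes only if `y = 0`.
-/

/-- In a residually finite group, a single normal subgroup of finite index separates any finite
set of nontrivial elements from the identity. -/
theorem exists_normal_finiteIndex_avoiding {G : Type*} [Group G]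
    (hres : ∀ g : G, g ≠ 1 → ∃ N : Subgroup G, N.Normal ∧ N.FiniteIndex ∧ g ∉ N)
    {T : Set G} (hT : T.Finite) :
    ∃ N : Subgroup G, N.Normal ∧ N.FiniteIndex ∧ ∀ g ∈ T, g ∈ N → g = 1 := by
  induction T, hT using Set.Finite.induction_on with
  | empty => exact ⟨⊤, inferInstance, inferInstance, by simp⟩
  | @insert a T _ _ ih =>
    obtain ⟨N, hN, hNf, h⟩ := ih
    by_cases ha : a = 1
    · refine ⟨N, hN, hNf, ?_⟩
      rintro g (rfl | hg) hgN
      exacts [ha, h g hg hgN]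
    · obtain ⟨M, hM, hMf, haM⟩ := hres a ha
      refine ⟨N ⊓ M, inferInstance, inferInstance, ?_⟩
      rintro g (rfl | hg) hgN
      exacts [absurd hgN.2 haM, h g hg hgN.1]

/-- Let `G` be a residually finite group, `K` a field, `n : ℕ`, `P` a group
and `φ : P →* (Fin n → G)`. For each normal subgroup `H` of `G` of finite index, let `I_H` be
the kernel of the `K`-algebra map `MonoidAlgebra K P → MonoidAlgebra K ((G ⧸ H)ⁿ)` induced by
composing `φ` with the `n`-fold product of the quotient map.  Then `⋂_H I_H` equals the kernel
of the `K`-algebra map induced by `φ`. -/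
theorem stmt1 (K : Type) [Field K] (G : Type) [Group G]
    (hres : ∀ g : G, g ≠ 1 → ∃ N : Subgroup G, N.Normal ∧ N.FiniteIndex ∧ g ∉ N)
    (n : ℕ) (P : Type) [Group P] (φ : P →* (Fin n → G)) :
    sInf { I : Ideal (MonoidAlgebra K P) |
      ∃ (H : Subgroup G) (_ : H.Normal) (_ : H.FiniteIndex),
        I = RingHom.ker (MonoidAlgebra.mapDomainAlgHom K K
          ((Pi.monoidHom fun i => (QuotientGroup.mk' H).comp
              (Pi.evalMonoidHom (fun _ : Fin n => G) i)).comp φ)) } =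
    RingHom.ker (MonoidAlgebra.mapDomainAlgHom K K φ) := by
  apply le_antisymm
  · intro x hx
    rw [Submodule.mem_sInf] at hx
    rw [RingHom.mem_ker]
    set y := MonoidAlgebra.mapDomainAlgHom K K φ x with hy
    have hfin : (⋃ i : Fin n, Set.image2 (fun a b : Fin n → G => (a i)⁻¹ * b i)
        (y.coeff.support : Set (Fin n → G)) y.coeff.support).Finite :=
      Set.finite_iUnion fun i =>
        Set.Finite.image2 _ (Finset.finite_toSet _) (Finset.finite_toSet _)
    obtain ⟨H, hH, hHf, hsep⟩ := exists_normal_finiteIndex_avoiding hres hfin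
    have hker := hx _ ⟨H, hH, hHf, rfl⟩
    rw [RingHom.mem_ker, MonoidAlgebra.mapDomainAlgHom_comp, AlgHom.comp_apply, ← hy] at hker
    set q : (Fin n → G) →* (Fin n → G ⧸ H) := MonoidHom.pi fun i =>
      (QuotientGroup.mk' H).comp (Pi.evalMonoidHom (fun _ : Fin n => G) i)
    have hinj : Set.InjOn q (y.coeff.support : Set (Fin n → G)) := by
      intro a ha b hb hab
      funext i
      have hi : (a i : G ⧸ H) = b i := congrFun hab i
      exact inv_mul_eq_one.mp <| hsep _
        (Set.mem_iUnion.mpr ⟨i, Set.mem_image2_of_mem ha hb⟩) (QuotientGroup.eq.mp hi)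
    have hzero : Finsupp.mapDomain q y.coeff = Finsupp.mapDomain q 0 := by
      rw [Finsupp.mapDomain_zero]
      exact congrArg MonoidAlgebra.coeff hker
    exact MonoidAlgebra.coeff_injective <|
      Finsupp.mapDomain_injOn _ hinj (Set.Subset.refl _) (by simp) hzero
  · refine le_sInf ?_
    rintro _ ⟨H, hH, hHf, rfl⟩ x hx
    rw [RingHom.mem_ker] at hx ⊢
    rw [MonoidAlgebra.mapDomainAlgHom_comp, AlgHom.comp_apply, hx, map_zero]
end
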